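/- arXiv:2605.19101 — 2 statements merged into one kernel-verified Lean document; each statement's English description precedes it below -/
import Mathlib

section
/- (Inter-group Heterogeneity Bound, Lemma 2) Suppose the global heterogeneity bound (1/M) Σ_{m=1}^M ‖g_m − ḡ‖² ≤ β² ‖ḡ‖² + ζ² holds for nonnegative constants β, ζ, and let M_min = min_k M_k > 0. Then the inter-group variance satisfies the explicit bound (1/K) Σ_{k=1}^K ‖ḡ_k − ḡ‖² ≤ (M β² / (K M_min)) ‖ḡ‖² + (M ζ² / (K M_min)) − (1/(K M_min)) Σ_{k=1}^K Σ_{m∈G_k} ‖g_m − ḡ_k‖², where the subtracted nonnegative term is the total intra-group heterogeneity absorbed within the groups. -/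
open Finset

/-- **Inter-group Heterogeneity Bound (Lemma 2).** If the global heterogeneity
bound `(1/M) Σ_m ‖g_m − ḡ‖² ≤ β²‖ḡ‖² + ζ²` holds and `M_min = min_k M_k > 0`,
then the inter-group variance is bounded by
`(Mβ²/(K M_min))‖ḡ‖² + Mζ²/(K M_min) − (1/(K M_min)) Σ_k Σ_{m∈G_k} ‖g_m − ḡ_k‖²`. -/
theorem inter_group_heterogeneity_bound
    {E : Type*} [NormedAddCommGroup E] [InnerProductSpace ℝ E]
    {M K : ℕ} (hM : 0 < M) (hK : 0 < K)
    (g : Fin M → E)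
    (G : Fin K → Finset (Fin M))
    (hdisj : ∀ k k' : Fin K, k ≠ k' → Disjoint (G k) (G k'))
    (hcover : ∀ m : Fin M, ∃ k, m ∈ G k)
    (hne : ∀ k, (G k).Nonempty)
    (gbar : E) (hgbar : gbar = (M : ℝ)⁻¹ • ∑ m, g m)
    (gk : Fin K → E)
    (hgk : ∀ k, gk k = ((G k).card : ℝ)⁻¹ • ∑ m ∈ G k, g m)
    (Mmin : ℕ) (hMminpos : 0 < Mmin)
    (hMmin_le : ∀ k, Mmin ≤ (G k).card)
    (hMmin_attained : ∃ k, (G k).card = Mmin)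
    (β ζ : ℝ) (hβ : 0 ≤ β) (hζ : 0 ≤ ζ)
    (hglobal : (M : ℝ)⁻¹ * ∑ m, ‖g m - gbar‖ ^ 2 ≤ β ^ 2 * ‖gbar‖ ^ 2 + ζ ^ 2) :
    (K : ℝ)⁻¹ * ∑ k, ‖gk k - gbar‖ ^ 2
      ≤ (M : ℝ) * β ^ 2 / ((K : ℝ) * (Mmin : ℝ)) * ‖gbar‖ ^ 2
        + (M : ℝ) * ζ ^ 2 / ((K : ℝ) * (Mmin : ℝ))
        - ((K : ℝ) * (Mmin : ℝ))⁻¹ * ∑ k, ∑ m ∈ G k, ‖g m - gk k‖ ^ 2 := by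
  have hMr : (0 : ℝ) < M := by exact_mod_cast hM
  have hKr : (0 : ℝ) < K := by exact_mod_cast hK
  have hmr : (0 : ℝ) < Mmin := by exact_mod_cast hMminpos
  have hsplit : ∑ m, ‖g m - gbar‖ ^ 2 = ∑ k, ∑ m ∈ G k, ‖g m - gbar‖ ^ 2 := by
    rw [← Finset.sum_biUnion (fun k _ k' _ h => hdisj k k' h)]
    congr 1
    ext m
    simpa using hcover m
  have hgroup : ∀ k, ∑ m ∈ G k, ‖g m - gbar‖ ^ 2
      = ∑ m ∈ G k, ‖g m - gk k‖ ^ 2 + (G k).card * ‖gk k - gbar‖ ^ 2 := by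
    intro k
    have hc : ((G k).card : ℝ) ≠ 0 := by
      exact_mod_cast (Finset.card_pos.mpr (hne k)).ne'
    have hz : ∑ m ∈ G k, (g m - gk k) = 0 := by
      rw [Finset.sum_sub_distrib, Finset.sum_const, ← Nat.cast_smul_eq_nsmul ℝ, hgk k,
        smul_smul, mul_inv_cancel₀ hc, one_smul, sub_self]
    have hcross : ∑ m ∈ G k, inner ℝ (g m - gk k) (gk k - gbar) = 0 := by
      rw [← sum_inner, hz, inner_zero_left]
    have hpt : ∀ m ∈ G k, ‖g m - gbar‖ ^ 2 = ‖g m - gk k‖ ^ 2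
        + 2 * inner ℝ (g m - gk k) (gk k - gbar) + ‖gk k - gbar‖ ^ 2 := by
      intro m _
      rw [← norm_add_sq_real, sub_add_sub_cancel]
    rw [Finset.sum_congr rfl hpt, Finset.sum_add_distrib, Finset.sum_add_distrib,
      ← Finset.mul_sum, hcross, Finset.sum_const, nsmul_eq_mul]
    ring
  have hle : (Mmin : ℝ) * ∑ k, ‖gk k - gbar‖ ^ 2
      ≤ ∑ k, ((G k).card : ℝ) * ‖gk k - gbar‖ ^ 2 := by
    rw [Finset.mul_sum]
    refine Finset.sum_le_sum fun k _ => ?_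
    have : (Mmin : ℝ) ≤ (G k).card := by exact_mod_cast hMmin_le k
    gcongr
  have htot : ∑ m, ‖g m - gbar‖ ^ 2 = ∑ k, ∑ m ∈ G k, ‖g m - gk k‖ ^ 2
      + ∑ k, ((G k).card : ℝ) * ‖gk k - gbar‖ ^ 2 := by
    rw [hsplit, ← Finset.sum_add_distrib]
    exact Finset.sum_congr rfl fun k _ => hgroup k
  have hg2 : ∑ m, ‖g m - gbar‖ ^ 2 ≤ M * (β ^ 2 * ‖gbar‖ ^ 2 + ζ ^ 2) :=
    (inv_mul_le_iff₀ hMr).mp hglobal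
  have hfin : (Mmin : ℝ) * ∑ k, ‖gk k - gbar‖ ^ 2 ≤ M * (β ^ 2 * ‖gbar‖ ^ 2 + ζ ^ 2)
      - ∑ k, ∑ m ∈ G k, ‖g m - gk k‖ ^ 2 := by linarith
  have h := mul_le_mul_of_nonneg_left hfin (inv_pos.mpr (mul_pos hKr hmr)).le
  calc (K : ℝ)⁻¹ * ∑ k, ‖gk k - gbar‖ ^ 2
      = ((K : ℝ) * Mmin)⁻¹ * ((Mmin : ℝ) * ∑ k, ‖gk k - gbar‖ ^ 2) := by
        field_simp
    _ ≤ _ := h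
    _ = _ := by ring
end

section
/- (Corollary of Lemma 2) Suppose the global heterogeneity bound (1/M) Σ_{m=1}^M ‖g_m − ḡ‖² ≤ β² ‖ḡ‖² + ζ² holds for nonnegative constants β, ζ, and let M_min = min_k M_k > 0. Then there exist nonnegative constants β_g, ζ_g with β_g² ≤ M β² / (K M_min) and ζ_g² ≤ M ζ² / (K M_min) such that the inter-group heterogeneity bound (1/K) Σ_{k=1}^K ‖ḡ_k − ḡ‖² ≤ β_g² ‖ḡ‖² + ζ_g² holds. -/
open Finset

/-- **Corollary of Lemma 2.** Under the global heterogeneity bound, there exist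
nonnegative inter-group heterogeneity constants `β_g, ζ_g` with
`β_g² ≤ Mβ²/(K M_min)` and `ζ_g² ≤ Mζ²/(K M_min)` such that
`(1/K) Σ_k ‖ḡ_k − ḡ‖² ≤ β_g²‖ḡ‖² + ζ_g²`. -/
theorem inter_group_heterogeneity_constants_exist
    {E : Type*} [NormedAddCommGroup E] [InnerProductSpace ℝ E]
    {M K : ℕ} (hM : 0 < M) (hK : 0 < K)
    (g : Fin M → E)
    (G : Fin K → Finset (Fin M))
    (hdisj : ∀ k k' : Fin K, k ≠ k' → Disjoint (G k) (G k'))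
    (hcover : ∀ m : Fin M, ∃ k, m ∈ G k)
    (hne : ∀ k, (G k).Nonempty)
    (gbar : E) (hgbar : gbar = (M : ℝ)⁻¹ • ∑ m, g m)
    (gk : Fin K → E)
    (hgk : ∀ k, gk k = ((G k).card : ℝ)⁻¹ • ∑ m ∈ G k, g m)
    (Mmin : ℕ) (hMminpos : 0 < Mmin)
    (hMmin_le : ∀ k, Mmin ≤ (G k).card)
    (hMmin_attained : ∃ k, (G k).card = Mmin)
    (β ζ : ℝ) (hβ : 0 ≤ β) (hζ : 0 ≤ ζ)
    (hglobal : (M : ℝ)⁻¹ * ∑ m, ‖g m - gbar‖ ^ 2 ≤ β ^ 2 * ‖gbar‖ ^ 2 + ζ ^ 2) :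
    ∃ βg ζg : ℝ, 0 ≤ βg ∧ 0 ≤ ζg ∧
      βg ^ 2 ≤ (M : ℝ) * β ^ 2 / ((K : ℝ) * (Mmin : ℝ)) ∧
      ζg ^ 2 ≤ (M : ℝ) * ζ ^ 2 / ((K : ℝ) * (Mmin : ℝ)) ∧
      (K : ℝ)⁻¹ * ∑ k, ‖gk k - gbar‖ ^ 2 ≤ βg ^ 2 * ‖gbar‖ ^ 2 + ζg ^ 2 := by
  have hMR : (0 : ℝ) < M := by exact_mod_cast hM
  have hKR : (0 : ℝ) < K := by exact_mod_cast hK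
  have hmR : (0 : ℝ) < Mmin := by exact_mod_cast hMminpos
  -- per-group Jensen bound
  have hgroup : ∀ k, (Mmin : ℝ) * ‖gk k - gbar‖ ^ 2 ≤ ∑ m ∈ G k, ‖g m - gbar‖ ^ 2 := by
    intro k
    have hc : (0 : ℝ) < (G k).card := by exact_mod_cast (hne k).card_pos
    have hle : (Mmin : ℝ) ≤ (G k).card := by exact_mod_cast hMmin_le k
    have h1 : ((G k).card : ℝ) • (gk k - gbar) = ∑ m ∈ G k, (g m - gbar) := by
      rw [hgk k, smul_sub, smul_smul, mul_inv_cancel₀ hc.ne', one_smul,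
        Finset.sum_sub_distrib, Finset.sum_const, Nat.cast_smul_eq_nsmul]
    have h2 : ((G k).card : ℝ) * ‖gk k - gbar‖ ≤ ∑ m ∈ G k, ‖g m - gbar‖ := by
      have h := norm_sum_le (G k) (fun m => g m - gbar)
      rw [← h1, norm_smul, Real.norm_of_nonneg hc.le] at h
      exact h
    have h3 := sq_sum_le_card_mul_sum_sq (s := G k) (f := fun m => ‖g m - gbar‖)
    have h4 : (((G k).card : ℝ) * ‖gk k - gbar‖) ^ 2 ≤ (∑ m ∈ G k, ‖g m - gbar‖) ^ 2 :=
      pow_le_pow_left₀ (by positivity) h2 2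
    have h5 : ((G k).card : ℝ) * ‖gk k - gbar‖ ^ 2 ≤ ∑ m ∈ G k, ‖g m - gbar‖ ^ 2 := by
      refine le_of_mul_le_mul_left ?_ hc
      calc _ = (((G k).card : ℝ) * ‖gk k - gbar‖) ^ 2 := by ring
        _ ≤ _ := h4.trans h3
    exact (mul_le_mul_of_nonneg_right hle (sq_nonneg _)).trans h5
  have hsum : ∑ k, ∑ m ∈ G k, ‖g m - gbar‖ ^ 2 = ∑ m, ‖g m - gbar‖ ^ 2 := by
    rw [← Finset.sum_biUnion (fun k _ k' _ h => hdisj k k' h)]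
    congr 1
    ext m
    simpa using hcover m
  have htot : (Mmin : ℝ) * ∑ k, ‖gk k - gbar‖ ^ 2
      ≤ M * (β ^ 2 * ‖gbar‖ ^ 2 + ζ ^ 2) := by
    rw [Finset.mul_sum]
    refine (Finset.sum_le_sum fun k _ => hgroup k).trans ?_
    rw [hsum]
    exact (inv_mul_le_iff₀ hMR).1 hglobal
  have e1 : (0 : ℝ) ≤ (M : ℝ) * β ^ 2 / ((K : ℝ) * (Mmin : ℝ)) := by positivity
  have e2 : (0 : ℝ) ≤ (M : ℝ) * ζ ^ 2 / ((K : ℝ) * (Mmin : ℝ)) := by positivity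
  refine ⟨√((M : ℝ) * β ^ 2 / ((K : ℝ) * (Mmin : ℝ))), √((M : ℝ) * ζ ^ 2 / ((K : ℝ) * (Mmin : ℝ))),
    Real.sqrt_nonneg _, Real.sqrt_nonneg _, (Real.sq_sqrt e1).le, (Real.sq_sqrt e2).le, ?_⟩
  rw [Real.sq_sqrt e1, Real.sq_sqrt e2]
  have e3 : (M : ℝ) * β ^ 2 / ((K : ℝ) * (Mmin : ℝ)) * ‖gbar‖ ^ 2
      + (M : ℝ) * ζ ^ 2 / ((K : ℝ) * (Mmin : ℝ))
      = (K : ℝ)⁻¹ * ((M * (β ^ 2 * ‖gbar‖ ^ 2 + ζ ^ 2)) / Mmin) := by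
    field_simp
  rw [e3]
  refine mul_le_mul_of_nonneg_left ?_ (by positivity)
  rw [le_div_iff₀ hmR, mul_comm]
  exact htot
end
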